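/- For every (q,p,z) ∈ ℝ³, the image of the coordinate vector ∂_p under the derivative of f is given by Df(q,p,z)(0,1,0) = (λ(q,p,z)²/2)·(e₂(f(q,p,z)) − z·e₁(f(q,p,z))), where Df(q,p,z) is the Fréchet derivative of f at (q,p,z). -/

import Mathlib

open Real

/-- λ(q,p,z) = (1 + p²/4 + z²)^(−1/2) -/
noncomputable def lam (q p z : ℝ) : ℝ := (Real.sqrt (1 + p ^ 2 / 4 + z ^ 2))⁻¹

/-- f(q,p,z) = λ·(p/2·sin q − z·cos q, cos q, sin q, p/2·cos q + z·sin q) ∈ ℝ⁴,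
as a map on ℝ³ = ℝ × ℝ × ℝ. -/
noncomputable def f (x : ℝ × ℝ × ℝ) : EuclideanSpace ℝ (Fin 4) :=
  lam x.1 x.2.1 x.2.2 •
    (WithLp.equiv 2 (Fin 4 → ℝ)).symm
      ![x.2.1 / 2 * Real.sin x.1 - x.2.2 * Real.cos x.1, Real.cos x.1, Real.sin x.1,
        x.2.1 / 2 * Real.cos x.1 + x.2.2 * Real.sin x.1]

/-- e₁(w) = (−w₄, −w₃, w₂, w₁). -/
noncomputable def e₁ (w : EuclideanSpace ℝ (Fin 4)) : EuclideanSpace ℝ (Fin 4) :=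
  (WithLp.equiv 2 (Fin 4 → ℝ)).symm ![-(w 3), -(w 2), w 1, w 0]

/-- e₂(w) = (w₃, −w₄, −w₁, w₂). -/
noncomputable def e₂ (w : EuclideanSpace ℝ (Fin 4)) : EuclideanSpace ℝ (Fin 4) :=
  (WithLp.equiv 2 (Fin 4 → ℝ)).symm ![w 2, -(w 3), -(w 0), w 1]

/-!
Since `λ` is the inverse norm of the vector it multiplies, `f` is the radial projection to the
sphere of a map `g` that is affine in `p`. The derivative of the radial projection at `w` is the
orthogonal projection onto `w⊥` divided by `‖w‖`, and `w⊥` contains `e₁ w` and `e₂ w`. It remains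
to decompose `∂g/∂p` into its radial part and a combination of `e₁ g` and `e₂ g`.
-/

open scoped RealInnerProductSpace

section Normalize

variable {E F : Type*} [NormedAddCommGroup E] [InnerProductSpace ℝ E]
  [NormedAddCommGroup F] [NormedSpace ℝ F]

theorem hasFDerivAt_norm {w : E} (hw : w ≠ 0) :
    HasFDerivAt (fun v : E => ‖v‖) (‖w‖⁻¹ • innerSL ℝ w) w := by
  have hsq : ‖w‖ ^ 2 ≠ 0 := pow_ne_zero 2 (norm_ne_zero_iff.2 hw)
  have hsqrt := (hasStrictFDerivAt_norm_sq w).hasFDerivAt.sqrt hsq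
  simp only [sqrt_sq (norm_nonneg _)] at hsqrt
  refine hsqrt.congr_fderiv ?_
  module

theorem hasFDerivAt_normalize {w : E} (hw : w ≠ 0) :
    HasFDerivAt (NormedSpace.normalize : E → E) (‖w‖⁻¹ • (ℝ ∙ w)ᗮ.starProjection) w := by
  have hnorm : ‖w‖ ≠ 0 := norm_ne_zero_iff.2 hw
  have hinv := (hasDerivAt_inv hnorm).comp_hasFDerivAt w (hasFDerivAt_norm hw)
  refine (hinv.smul (hasFDerivAt_id w)).congr_fderiv ?_
  ext v
  simp only [Function.comp_apply, id_eq, add_apply, smul_apply, ContinuousLinearMap.id_apply,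
    ContinuousLinearMap.smulRight_apply, coe_innerSL_apply, smul_eq_mul,
    Submodule.starProjection_orthogonal_val, Submodule.starProjection_singleton,
    RCLike.ofReal_real_eq_id]
  module

theorem fderiv_normalize_comp_apply {g : F → E} {x : F} (hg : DifferentiableAt ℝ g x)
    (hx : g x ≠ 0) (v : F) :
    fderiv ℝ (NormedSpace.normalize ∘ g) x v =
      ‖g x‖⁻¹ • (ℝ ∙ g x)ᗮ.starProjection (fderiv ℝ g x v) := by
  rw [((hasFDerivAt_normalize hx).comp x hg.hasFDerivAt).fderiv]
  rfl

theorem starProjection_orthogonal_singleton_add_smul {v w : E} (hwv : ⟪w, v⟫ = 0) (c : ℝ) :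
    (ℝ ∙ w)ᗮ.starProjection (v + c • w) = v := by
  have hv : v ∈ (ℝ ∙ w)ᗮ := Submodule.mem_orthogonal_singleton_iff_inner_right.2 hwv
  rw [map_add, map_smul, Submodule.starProjection_orthogonalComplement_singleton_eq_zero,
    smul_zero, add_zero, Submodule.starProjection_eq_self_iff.2 hv]

end Normalize

theorem fderiv_apply_eq_of_forall_add_smul {𝕜 E F : Type*} [NontriviallyNormedField 𝕜]
    [NormedAddCommGroup E] [NormedSpace 𝕜 E] [NormedAddCommGroup F] [NormedSpace 𝕜 F]
    {g : E → F} {x v : E} {w : F} (hg : DifferentiableAt 𝕜 g x)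
    (haffine : ∀ t : 𝕜, g (x + t • v) = g x + t • w) : fderiv 𝕜 g x v = w := by
  have hline : HasLineDerivAt 𝕜 g w x v := by
    simpa only [HasLineDerivAt, haffine, id_eq, one_smul] using
      ((hasDerivAt_id (0 : 𝕜)).smul_const w).const_add (g x)
  rw [← hg.lineDeriv_eq_fderiv, hline.lineDeriv]

section Frame

variable (c : ℝ) (w : EuclideanSpace ℝ (Fin 4))

theorem e₁_smul : e₁ (c • w) = c • e₁ w := by
  ext i
  fin_cases i <;> simp [e₁]

theorem e₂_smul : e₂ (c • w) = c • e₂ w := by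
  ext i
  fin_cases i <;> simp [e₂]

theorem inner_e₁_right_self : ⟪w, e₁ w⟫ = 0 := by
  simp only [e₁, PiLp.inner_apply, Fin.sum_univ_four, WithLp.equiv_symm_apply, Matrix.cons_val,
    RCLike.inner_apply, conj_trivial]
  ring

theorem inner_e₂_right_self : ⟪w, e₂ w⟫ = 0 := by
  simp only [e₂, PiLp.inner_apply, Fin.sum_univ_four, WithLp.equiv_symm_apply, Matrix.cons_val,
    RCLike.inner_apply, conj_trivial]
  ring

end Frame

/-- The vector-valued factor of `f`, denoted `g` above: `f` is its radial projection to `S³`. -/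
noncomputable def unnormalizedF (x : ℝ × ℝ × ℝ) : EuclideanSpace ℝ (Fin 4) :=
  !₂[x.2.1 / 2 * sin x.1 - x.2.2 * cos x.1, cos x.1, sin x.1,
    x.2.1 / 2 * cos x.1 + x.2.2 * sin x.1]

theorem norm_unnormalizedF_sq (q p z : ℝ) :
    ‖unnormalizedF (q, p, z)‖ ^ 2 = 1 + p ^ 2 / 4 + z ^ 2 := by
  simp only [unnormalizedF, EuclideanSpace.real_norm_sq_eq, Fin.sum_univ_four, Matrix.cons_val]
  linear_combination (1 + p ^ 2 / 4 + z ^ 2) * sin_sq_add_cos_sq q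

theorem unnormalizedF_ne_zero (x : ℝ × ℝ × ℝ) : unnormalizedF x ≠ 0 := by
  have hpos : 0 < ‖unnormalizedF x‖ ^ 2 := by
    rw [norm_unnormalizedF_sq]
    positivity
  exact norm_ne_zero_iff.1 (ne_zero_pow two_ne_zero hpos.ne')

theorem lam_eq_inv_norm (q p z : ℝ) : lam q p z = ‖unnormalizedF (q, p, z)‖⁻¹ := by
  rw [lam, ← norm_unnormalizedF_sq q, sqrt_sq (norm_nonneg _)]

theorem f_eq_lam_smul (q p z : ℝ) : f (q, p, z) = lam q p z • unnormalizedF (q, p, z) :=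
  rfl

theorem f_eq_normalize_comp : f = NormedSpace.normalize ∘ unnormalizedF := by
  funext ⟨q, p, z⟩
  rw [f_eq_lam_smul, lam_eq_inv_norm, Function.comp_apply, NormedSpace.normalize]

theorem differentiable_unnormalizedF : Differentiable ℝ unnormalizedF := by
  refine differentiable_euclidean.2 fun i => ?_
  fin_cases i <;> simp only [unnormalizedF, Fin.reduceFinMk, Matrix.cons_val] <;> fun_prop

theorem fderiv_unnormalizedF_dp (q p z : ℝ) :
    fderiv ℝ unnormalizedF (q, p, z) (0, 1, 0) = !₂[sin q / 2, 0, 0, cos q / 2] := by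
  refine fderiv_apply_eq_of_forall_add_smul (differentiable_unnormalizedF _) fun t => ?_
  ext i
  fin_cases i <;>
    simp only [unnormalizedF, Prod.smul_mk, Prod.mk_add_mk, PiLp.add_apply, PiLp.smul_apply,
      smul_eq_mul, mul_zero, add_zero, Fin.reduceFinMk, Matrix.cons_val] <;>
    ring

/-- The radial coefficient is `⟪g, ∂g/∂p⟫ / ‖g‖²`. -/
theorem fderiv_unnormalizedF_dp_eq_frame (q p z : ℝ) :
    fderiv ℝ unnormalizedF (q, p, z) (0, 1, 0) =
      (lam q p z ^ 2 / 2) • (e₂ (unnormalizedF (q, p, z)) - z • e₁ (unnormalizedF (q, p, z))) +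
        (lam q p z ^ 2 * p / 4) • unnormalizedF (q, p, z) := by
  have hlam : lam q p z ^ 2 * (1 + p ^ 2 / 4 + z ^ 2) = 1 := by
    rw [lam_eq_inv_norm, ← norm_unnormalizedF_sq q, inv_pow, inv_mul_cancel₀]
    exact pow_ne_zero 2 (norm_ne_zero_iff.2 (unnormalizedF_ne_zero _))
  rw [fderiv_unnormalizedF_dp]
  ext i
  fin_cases i <;>
    simp only [unnormalizedF, e₁, e₂, WithLp.equiv_symm_apply, PiLp.add_apply, PiLp.sub_apply,
      PiLp.smul_apply, smul_eq_mul, Fin.reduceFinMk, Matrix.cons_val]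
  · linear_combination (-sin q / 2) * hlam
  · ring
  · ring
  · linear_combination (-cos q / 2) * hlam

/-- The pushforward of ∂_p under f equals (λ²/2)·(e₂ − z·e₁) at f(q,p,z). -/
theorem f_pushforward_dp (q p z : ℝ) :
    fderiv ℝ f (q, p, z) (0, 1, 0) =
      ((lam q p z) ^ 2 / 2) • (e₂ (f (q, p, z)) - z • e₁ (f (q, p, z))) := by
  set g := unnormalizedF (q, p, z)
  have hperp : ⟪g, (lam q p z ^ 2 / 2) • (e₂ g - z • e₁ g)⟫ = 0 := by
    simp only [inner_smul_right, inner_sub_right, inner_e₁_right_self, inner_e₂_right_self,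
      mul_zero, sub_zero]
  calc fderiv ℝ f (q, p, z) (0, 1, 0)
      = lam q p z • (ℝ ∙ g)ᗮ.starProjection (fderiv ℝ unnormalizedF (q, p, z) (0, 1, 0)) := by
        rw [f_eq_normalize_comp, fderiv_normalize_comp_apply (differentiable_unnormalizedF _)
          (unnormalizedF_ne_zero _), lam_eq_inv_norm]
    _ = lam q p z • (lam q p z ^ 2 / 2) • (e₂ g - z • e₁ g) := by
        rw [fderiv_unnormalizedF_dp_eq_frame,
          starProjection_orthogonal_singleton_add_smul hperp]
    _ = (lam q p z ^ 2 / 2) • (e₂ (f (q, p, z)) - z • e₁ (f (q, p, z))) := by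
        rw [f_eq_lam_smul, e₁_smul, e₂_smul]
        module
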